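/- Suppose K = n and M = ⌈n^α⌉ for a constant 0 < α < 1/2. Then, under the Uniform popularity distribution, with high probability the maximum load L of Strategy I lies in the interval [Ω(log n/log log n), O(log n)]: there exist constants c_1, c_2, c > 0 such that for all sufficiently large n, with probability at least 1 − n^{−c}, c_1·log n/log log n ≤ L ≤ c_2·log n. -/

import Mathlib

open scoped Classical BigOperators
open Filter

/-- Nodes of the `m × m` torus grid (a `√n × √n` grid with wrap-around, `n = m²`). -/
abbrev Node (m : ℕ) := Fin m × Fin m

/-- Wrap-around distance between two coordinates in `Fin m`. -/
def cdist {m : ℕ} (a b : Fin m) : ℕ :=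
  min ((a.val + m - b.val) % m) ((b.val + m - a.val) % m)

/-- Graph (shortest-path) distance on the torus grid. -/
def torusDist {m : ℕ} (u v : Node m) : ℕ := cdist u.1 v.1 + cdist u.2 v.2

/-- A cache placement: each of the `m²` nodes fills `M` cache slots with files from a
library of `K` files.  Under the Uniform popularity distribution the random placement
is uniform over all such functions (each slot i.i.d. uniform on the `K` files). -/
abbrev Placement (m M K : ℕ) := Node m → Fin M → Fin K

/-- Node `u` has cached file `j`. -/
def cached {m M K : ℕ} (ω : Placement m M K) (u : Node m) (j : Fin K) : Prop :=
  ∃ i, ω u i = j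

/-- Probability of an event under the uniform measure on a finite type. -/
noncomputable def unifProb {Ω : Type*} [Fintype Ω] (E : Set Ω) : ℝ :=
  ((Finset.univ.filter (fun ω => ω ∈ E)).card : ℝ) / (Fintype.card Ω : ℝ)

/-- `A` assigns each of the `n'` requests (request `t` originating at node `(ρ t).1`
and asking for file `(ρ t).2`) to a nearest node that cached the requested file;
quantifying over all such `A` covers every random tie-breaking of Strategy I. -/
def validAssign {m M K n' : ℕ} (ω : Placement m M K) (ρ : Fin n' → Node m × Fin K)
    (A : Fin n' → Node m) : Prop :=
  ∀ t, cached ω (A t) (ρ t).2 ∧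
    ∀ v, cached ω v (ρ t).2 → torusDist (ρ t).1 (A t) ≤ torusDist (ρ t).1 v

/-- Maximum load: the maximum over nodes of the number of requests assigned to it. -/
noncomputable def maxLoad {m n' : ℕ} (A : Fin n' → Node m) : ℕ :=
  Finset.univ.sup fun v : Node m => (Finset.univ.filter fun t => A t = v).card

/-- Cache size `M = ⌈n^α⌉`. -/
noncomputable def Mf (α : ℝ) (n : ℕ) : ℕ := ⌈(n : ℝ) ^ α⌉₊

/-!
Write `n = m ^ 2` for the number of nodes. With high probability every file has a replica within
distance `D` of every node, where `D ^ 2` is of order `n * log n / M`. A node then serves only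
requests for one of its `M` files from a ball with `O(D ^ 2)` nodes, in expectation `O(log n)` of
them, and a Chernoff bound together with a union bound over the nodes gives the upper bound.

For the lower bound take `r ^ 2` to be a small multiple of `n / M`, so that the nodes within `2 * r`
of `v` cache at most a fixed fraction of the library. Hence `v` typically has at least `M / 2`
*private* files, cached at no other node within `2 * r`, and since `M ^ 2 = o(n)`, Markov's
inequality makes this true of half of the nodes with high probability. A request for a private file
of `v` from distance at most `r` can only be served by `v`. These pairs (origin, file) form disjoint
cells, one for each node, each containing a constant expected number of requests, and a given cell
has at least `k` of order `log n / log log n` with probability at least a constant times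
`n ^ (-1/2)`. The occupancies of disjoint cells are negatively correlated, so by Chebyshev's
inequality some cell does.
-/

/-! ### Finite uniform probability -/

section UniformProbability

variable {Ω Ω' ι : Type*} [Fintype Ω] [Fintype Ω']

lemma unifProb_eq_expect (A : Set Ω) : unifProb A = 𝔼 x, A.indicator (1 : Ω → ℝ) x := by
  simp [unifProb, Fintype.expect_eq_sum_div_card, Set.indicator_apply, Finset.sum_boole]

lemma unifProb_coe_finset (S : Finset Ω) :
    unifProb (S : Set Ω) = S.card / Fintype.card Ω := by
  simp [unifProb]

@[simp]
lemma unifProb_empty : unifProb (∅ : Set Ω) = 0 := by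
  simp [unifProb]

@[simp]
lemma unifProb_univ [Nonempty Ω] : unifProb (Set.univ : Set Ω) = 1 := by
  simp [unifProb]

lemma unifProb_nonneg (A : Set Ω) : 0 ≤ unifProb A := by
  unfold unifProb
  positivity

lemma unifProb_mono {A B : Set Ω} (h : A ⊆ B) : unifProb A ≤ unifProb B := by
  unfold unifProb
  gcongr

lemma unifProb_le_one (A : Set Ω) : unifProb A ≤ 1 :=
  div_le_one_of_le₀ (mod_cast Finset.card_le_univ _) (Nat.cast_nonneg _)

lemma unifProb_compl [Nonempty Ω] (A : Set Ω) : unifProb Aᶜ = 1 - unifProb A := by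
  simp [unifProb_eq_expect, Set.indicator_compl, Finset.expect_sub_distrib]

lemma unifProb_union_le (A B : Set Ω) : unifProb (A ∪ B) ≤ unifProb A + unifProb B := by
  simp only [unifProb_eq_expect, ← Finset.expect_add_distrib]
  refine Finset.expect_le_expect fun x _ => ?_
  by_cases hA : x ∈ A <;> by_cases hB : x ∈ B <;> simp [hA, hB]

lemma unifProb_exists_le_sum [Fintype ι] (A : ι → Set Ω) :
    unifProb {x | ∃ i, x ∈ A i} ≤ ∑ i, unifProb (A i) := by
  simp only [unifProb_eq_expect, ← Finset.expect_sum_comm]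
  refine Finset.expect_le_expect fun x _ => ?_
  have hnonneg : ∀ i ∈ Finset.univ, 0 ≤ (A i).indicator (1 : Ω → ℝ) x := fun i _ =>
    Set.indicator_nonneg (fun _ _ => zero_le_one) x
  refine Set.indicator_apply_le' ?_ fun _ => Finset.sum_nonneg hnonneg
  rintro ⟨i, hi⟩
  simpa [hi] using Finset.single_le_sum hnonneg (Finset.mem_univ i)

lemma unifProb_exists_le_card_mul [Fintype ι] (A : ι → Set Ω) {δ : ℝ}
    (h : ∀ i, unifProb (A i) ≤ δ) : unifProb {x | ∃ i, x ∈ A i} ≤ Fintype.card ι * δ :=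
  calc unifProb {x | ∃ i, x ∈ A i} ≤ ∑ i, unifProb (A i) := unifProb_exists_le_sum A
    _ ≤ ∑ _i : ι, δ := Finset.sum_le_sum fun i _ => h i
    _ = Fintype.card ι * δ := by simp

lemma unifProb_preimage_equiv (e : Ω ≃ Ω') (A : Set Ω') :
    unifProb {x | e x ∈ A} = unifProb A := by
  simp only [unifProb_eq_expect]
  exact Finset.expect_equiv e (by simp) (by simp [Set.indicator_apply])

lemma unifProb_prod (A : Set (Ω × Ω')) :
    unifProb A = 𝔼 x, unifProb {y | (x, y) ∈ A} := by
  simp only [unifProb_eq_expect]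
  rw [← Finset.univ_product_univ, Finset.expect_product]
  rfl

lemma unifProb_prod_le [Nonempty Ω] (A : Set (Ω × Ω')) (G : Set Ω) {δ : ℝ} (hδ : 0 ≤ δ)
    (h : ∀ x ∈ G, unifProb {y | (x, y) ∈ A} ≤ δ) : unifProb A ≤ unifProb Gᶜ + δ := by
  rw [unifProb_prod, unifProb_eq_expect,
    ← Finset.expect_const (s := (Finset.univ : Finset Ω)) Finset.univ_nonempty δ,
    ← Finset.expect_add_distrib]
  refine Finset.expect_le_expect fun x _ => ?_
  by_cases hx : x ∈ G
  · simpa [hx] using h x hx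
  · simpa [hx] using (unifProb_le_one {y | (x, y) ∈ A}).trans (le_add_of_nonneg_right hδ)

lemma unifProb_le_expect_div {f : Ω → ℝ} (hf : ∀ x, 0 ≤ f x) {a : ℝ} (ha : 0 < a) :
    unifProb {x | a ≤ f x} ≤ (𝔼 x, f x) / a := by
  rw [le_div_iff₀ ha, unifProb_eq_expect, Finset.expect_mul]
  refine Finset.expect_le_expect fun x _ => ?_
  by_cases hx : a ≤ f x
  · simp [hx]
  · simpa [hx] using hf x

lemma unifProb_two_mul_card_notMem_lt_le [Fintype ι] [Nonempty ι] {A : ι → Set Ω} {δ : ℝ}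
    (h : ∀ i, unifProb (A i) ≤ δ) :
    unifProb {x | 2 * (Finset.univ.filter fun i => x ∉ A i).card < Fintype.card ι} ≤ 2 * δ := by
  set X : Ω → ℝ := fun x => ∑ i, (A i).indicator (1 : Ω → ℝ) x
  have half_pos : (0 : ℝ) < Fintype.card ι / 2 := by
    have : 0 < Fintype.card ι := Fintype.card_pos
    positivity
  have half_le : ∀ x, 2 * (Finset.univ.filter fun i => x ∉ A i).card < Fintype.card ι →
      (Fintype.card ι / 2 : ℝ) ≤ X x := by
    intro x hx
    have split := Finset.card_filter_add_card_filter_not (s := Finset.univ) fun i => x ∈ A i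
    rw [Finset.card_univ] at split
    simp only [X, Set.indicator_apply, Pi.one_apply, Finset.sum_boole]
    rw [div_le_iff₀ two_pos]
    exact_mod_cast (by omega : Fintype.card ι ≤ (Finset.univ.filter fun i => x ∈ A i).card * 2)
  calc unifProb {x | 2 * (Finset.univ.filter fun i => x ∉ A i).card < Fintype.card ι}
      ≤ unifProb {x | Fintype.card ι / 2 ≤ X x} := unifProb_mono half_le
    _ ≤ (𝔼 x, X x) / (Fintype.card ι / 2) := unifProb_le_expect_div
        (fun x => Finset.sum_nonneg fun i _ => Set.indicator_nonneg (by simp) x) half_pos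
    _ ≤ (Fintype.card ι * δ) / (Fintype.card ι / 2) := by
        gcongr
        simp only [X, Finset.expect_sum_comm, ← unifProb_eq_expect]
        simpa using Finset.sum_le_card_nsmul Finset.univ _ δ fun i _ => h i
    _ = 2 * δ := by
        field_simp

lemma unifProb_eq_zero_le_variance_div [Nonempty Ω] {f : Ω → ℝ} (hf : 𝔼 x, f x ≠ 0) :
    unifProb {x | f x = 0} ≤ ((𝔼 x, f x ^ 2) - (𝔼 x, f x) ^ 2) / (𝔼 x, f x) ^ 2 := by
  set μ := 𝔼 x, f x with hμ
  have variance_eq : 𝔼 x, (f x - μ) ^ 2 = (𝔼 x, f x ^ 2) - μ ^ 2 := by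
    simp only [sub_sq, Finset.expect_add_distrib, Finset.expect_sub_distrib, ← Finset.expect_mul,
      ← Finset.mul_expect, Finset.expect_const Finset.univ_nonempty, ← hμ]
    ring
  rw [← variance_eq]
  refine (unifProb_mono fun x (hx : f x = 0) => ?_).trans
    (unifProb_le_expect_div (fun x => sq_nonneg (f x - μ)) (by positivity))
  simp [hx]

lemma expect_sq_sum_indicator_le (I : Finset ι) (A : ι → Set Ω)
    (hneg : ∀ i ∈ I, ∀ j ∈ I, i ≠ j → unifProb (A i ∩ A j) ≤ unifProb (A i) * unifProb (A j)) :
    𝔼 x, (∑ i ∈ I, (A i).indicator (1 : Ω → ℝ) x) ^ 2 ≤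
      (∑ i ∈ I, unifProb (A i)) ^ 2 + ∑ i ∈ I, unifProb (A i) := by
  have pair_le : ∀ i ∈ I, ∀ j ∈ I, unifProb (A i ∩ A j) ≤
      unifProb (A i) * unifProb (A j) + if i = j then unifProb (A i) else 0 := by
    intro i hi j hj
    obtain rfl | hij := eq_or_ne i j
    · simpa using mul_self_nonneg (unifProb (A i))
    · simpa [hij] using hneg i hi j hj hij
  calc 𝔼 x, (∑ i ∈ I, (A i).indicator (1 : Ω → ℝ) x) ^ 2
      = ∑ i ∈ I, ∑ j ∈ I, unifProb (A i ∩ A j) := by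
        simp only [unifProb_eq_expect, ← Finset.expect_sum_comm, sq, Finset.sum_mul_sum,
          Set.inter_indicator_one, Pi.mul_apply]
    _ ≤ ∑ i ∈ I, ∑ j ∈ I,
          (unifProb (A i) * unifProb (A j) + if i = j then unifProb (A i) else 0) :=
        Finset.sum_le_sum fun i hi => Finset.sum_le_sum fun j hj => pair_le i hi j hj
    _ = (∑ i ∈ I, unifProb (A i)) ^ 2 + ∑ i ∈ I, unifProb (A i) := by
        simp only [Finset.sum_add_distrib, ← Finset.sum_mul_sum, sq, Finset.sum_ite_eq]
        congr 1
        exact Finset.sum_congr rfl fun i hi => if_pos hi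

lemma unifProb_forall_notMem_le_inv [Nonempty Ω] (I : Finset ι) (A : ι → Set Ω)
    (hneg : ∀ i ∈ I, ∀ j ∈ I, i ≠ j → unifProb (A i ∩ A j) ≤ unifProb (A i) * unifProb (A j))
    (hpos : 0 < ∑ i ∈ I, unifProb (A i)) :
    unifProb {x | ∀ i ∈ I, x ∉ A i} ≤ (∑ i ∈ I, unifProb (A i))⁻¹ := by
  set X : Ω → ℝ := fun x => ∑ i ∈ I, (A i).indicator (1 : Ω → ℝ) x
  set μ := ∑ i ∈ I, unifProb (A i)
  have expect_X : 𝔼 x, X x = μ := by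
    simp only [X, μ, Finset.expect_sum_comm, unifProb_eq_expect]
  calc unifProb {x | ∀ i ∈ I, x ∉ A i} ≤ unifProb {x | X x = 0} :=
        unifProb_mono fun x hx =>
          Finset.sum_eq_zero fun i hi => Set.indicator_of_notMem (hx i hi) _
    _ ≤ ((𝔼 x, X x ^ 2) - μ ^ 2) / μ ^ 2 :=
        expect_X ▸ unifProb_eq_zero_le_variance_div (expect_X ▸ hpos.ne')
    _ ≤ μ / μ ^ 2 := by
        gcongr
        linarith [expect_sq_sum_indicator_le I A hneg]
    _ = μ⁻¹ := by
        field_simp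

lemma expect_prod_apply [Fintype ι] [DecidableEq ι] (g : ι → Ω → ℝ) :
    𝔼 ρ : ι → Ω, ∏ t, g t (ρ t) = ∏ t, 𝔼 x, g t x := by
  simp only [Fintype.expect_eq_sum_div_card, Finset.prod_div_distrib, Finset.prod_univ_sum,
    Fintype.piFinset_univ]
  simp

lemma unifProb_forall_mem [Fintype ι] [DecidableEq ι] (A : ι → Set Ω) :
    unifProb {ρ : ι → Ω | ∀ t, ρ t ∈ A t} = ∏ t, unifProb (A t) := by
  simp only [unifProb_eq_expect, ← expect_prod_apply]
  refine Finset.expect_congr rfl fun ρ _ => ?_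
  simp [Set.indicator_apply, Finset.prod_ite_zero]

lemma unifProb_le_of_forall_update [Fintype ι] [DecidableEq ι] [Nonempty Ω]
    (A : Set (ι → Ω)) (i : ι) {δ : ℝ} (h : ∀ ω, unifProb {x | Function.update ω i x ∈ A} ≤ δ) :
    unifProb A ≤ δ := by
  set e := (Equiv.funSplitAt i Ω).trans (Equiv.prodComm _ _) with he
  have update_eq : ∀ y x x', e.symm (y, x) = Function.update (e.symm (y, x')) i x := by
    intro y x x'
    ext j
    obtain rfl | hj := eq_or_ne j i
    · simp [he]
    · simp [he, hj]
  rw [← unifProb_preimage_equiv e.symm, unifProb_prod]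
  refine Finset.expect_le Finset.univ_nonempty fun y _ => ?_
  obtain ⟨x'⟩ := ‹Nonempty Ω›
  simpa only [← update_eq, Set.mem_ofPred_eq] using h (e.symm (y, x'))

lemma unifProb_injective (M : ℕ) :
    unifProb {x : Fin M → Ω | Function.Injective x} =
      (Fintype.card Ω).descFactorial M / (Fintype.card Ω : ℝ) ^ M := by
  have card_eq := Fintype.card_congr (Equiv.subtypeInjectiveEquivEmbedding (Fin M) Ω)
  rw [Fintype.card_embedding_eq, Fintype.card_fin, Fintype.card_subtype] at card_eq
  rw [← card_eq, unifProb, Fintype.card_fun, Fintype.card_fin, Nat.cast_pow]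
  congr!

lemma unifProb_not_injective_le [Nonempty Ω] (M : ℕ) :
    unifProb {x : Fin M → Ω | ¬ Function.Injective x} ≤ (M : ℝ) ^ 2 / Fintype.card Ω := by
  set K := Fintype.card Ω with hK
  have hK0 : (0 : ℝ) < K := mod_cast Fintype.card_pos (α := Ω)
  obtain hMK | hKM := le_total M K
  · have hMK1 : (M : ℝ) / K ≤ 1 := (div_le_one hK0).2 (mod_cast hMK)
    have bernoulli := one_add_mul_le_pow (a := -((M : ℝ) / K)) (by linarith) M
    have le_injective : (1 + -((M : ℝ) / K)) ^ M ≤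
        unifProb {x : Fin M → Ω | Function.Injective x} := by
      rw [unifProb_injective, ← hK, le_div_iff₀ (by positivity), ← mul_pow]
      calc ((1 + -((M : ℝ) / K)) * K) ^ M ≤ ((K + 1 - M : ℕ) : ℝ) ^ M := by
            rw [Nat.cast_sub (by omega)]
            have cancel : (1 + -((M : ℝ) / K)) * K = K - M := by
              field_simp
              ring
            rw [cancel]
            push_cast
            gcongr
            · exact sub_nonneg.2 (mod_cast hMK)
            · linarith
        _ ≤ K.descFactorial M := mod_cast Nat.pow_sub_le_descFactorial K M
    rw [show {x : Fin M → Ω | ¬ Function.Injective x} = {x | Function.Injective x}ᶜ from rfl,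
      unifProb_compl]
    linarith [show (M : ℝ) * -((M : ℝ) / K) = -((M : ℝ) ^ 2 / K) by ring]
  · refine (unifProb_le_one _).trans ((one_le_div hK0).2 ?_)
    have hKM' : K ≤ M ^ 2 := hKM.trans (Nat.le_self_pow two_ne_zero M)
    exact_mod_cast hKM'

lemma unifProb_fin_succ {n : ℕ} (A : Set (Fin (n + 1) → Ω)) :
    unifProb A = 𝔼 x, unifProb {ρ : Fin n → Ω | (Fin.cons x ρ : Fin (n + 1) → Ω) ∈ A} := by
  rw [← unifProb_preimage_equiv (Fin.consEquiv fun _ => Ω), unifProb_prod]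
  rfl

lemma expect_ite_ite_of_disjoint [Nonempty Ω] {S T : Set Ω} (h : Disjoint S T) (a b c : ℝ) :
    𝔼 x, (if x ∈ S then a else if x ∈ T then b else c) =
      unifProb S * a + unifProb T * b + (1 - unifProb S - unifProb T) * c := by
  have ite_eq : ∀ x, (if x ∈ S then a else if x ∈ T then b else c) =
      S.indicator 1 x * (a - c) + T.indicator 1 x * (b - c) + c := by
    intro x
    by_cases hS : x ∈ S
    · simp [hS, Set.disjoint_left.mp h hS]
    · by_cases hT : x ∈ T <;> simp [hS, hT]
  simp only [ite_eq, Finset.expect_add_distrib, ← Finset.expect_mul, unifProb_eq_expect,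
    Finset.expect_const Finset.univ_nonempty]
  ring

lemma unifProb_add_le_one_of_disjoint {S T : Set Ω} (h : Disjoint S T) :
    unifProb S + unifProb T ≤ 1 := by
  simp only [unifProb_eq_expect, ← Finset.expect_add_distrib]
  cases isEmpty_or_nonempty Ω
  · simp
  · refine Finset.expect_le Finset.univ_nonempty fun x _ => ?_
    by_cases hS : x ∈ S
    · simp [hS, Set.disjoint_left.mp h hS]
    · by_cases hT : x ∈ T <;> simp [hS, hT]

end UniformProbability

/-! ### Occupancy of disjoint bins -/

section Occupancy

variable {Ω ι : Type*}

/-- The number of balls that the allocation `ρ` throws into the bin `S`. -/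
noncomputable def occupancy [Fintype ι] (S : Set Ω) (ρ : ι → Ω) : ℕ :=
  (Finset.univ.filter fun t => ρ t ∈ S).card

lemma occupancy_cons {n : ℕ} (S : Set Ω) (x : Ω) (ρ : Fin n → Ω) :
    occupancy S (Fin.cons x ρ : Fin (n + 1) → Ω) = occupancy S ρ + if x ∈ S then 1 else 0 := by
  simp only [occupancy, Finset.card_filter, Fin.sum_univ_succ, Fin.cons_zero, Fin.cons_succ]
  rw [add_comm]

lemma occupancy_le_occupancy [Fintype ι] {Ω' : Type*} {S : Set Ω} {T : Set Ω'} {ρ : ι → Ω}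
    {σ : ι → Ω'} (h : ∀ t, ρ t ∈ S → σ t ∈ T) : occupancy S ρ ≤ occupancy T σ :=
  Finset.card_le_card (Finset.monotone_filter_right _ fun t _ => h t)

variable [Fintype Ω] [Nonempty Ω]

lemma expect_exp_occupancy [Fintype ι] [DecidableEq ι] (S : Set Ω) :
    𝔼 ρ : ι → Ω, Real.exp (occupancy S ρ) =
      (1 + (Real.exp 1 - 1) * unifProb S) ^ Fintype.card ι := by
  have exp_eq_prod : ∀ ρ : ι → Ω,
      Real.exp (occupancy S ρ) = ∏ t, if ρ t ∈ S then Real.exp 1 else 1 := by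
    intro ρ
    rw [Finset.prod_ite, Finset.prod_const_one, mul_one, Finset.prod_const, ← Real.exp_nat_mul,
      mul_one, occupancy]
  have expect_ite : 𝔼 x, (if x ∈ S then Real.exp 1 else 1) =
      1 + (Real.exp 1 - 1) * unifProb S := by
    have := expect_ite_ite_of_disjoint (Set.disjoint_empty S) (Real.exp 1) 0 1
    simp only [Set.mem_empty_iff_false, if_false, unifProb_empty] at this
    linarith
  simp only [exp_eq_prod]
  rw [expect_prod_apply fun _ x => if x ∈ S then Real.exp 1 else 1]
  simp only [expect_ite, Finset.prod_const, Finset.card_univ]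

lemma unifProb_le_occupancy_le_exp [Fintype ι] [DecidableEq ι] {S : Set Ω} {q : ℝ}
    (hq : unifProb S ≤ q) (a : ℝ) :
    unifProb {ρ : ι → Ω | a ≤ occupancy S ρ} ≤ Real.exp (2 * q * Fintype.card ι - a) := by
  have hS := unifProb_nonneg S
  have one_add_le : 1 + (Real.exp 1 - 1) * unifProb S ≤ Real.exp (2 * q) := by
    nlinarith [Real.add_one_le_exp (2 * q), Real.exp_one_lt_d9]
  have one_add_nonneg : 0 ≤ 1 + (Real.exp 1 - 1) * unifProb S := by
    nlinarith [Real.add_one_le_exp 1]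
  calc unifProb {ρ : ι → Ω | a ≤ occupancy S ρ}
      = unifProb {ρ : ι → Ω | Real.exp a ≤ Real.exp (occupancy S ρ)} := by
        simp only [Real.exp_le_exp]
    _ ≤ (1 + (Real.exp 1 - 1) * unifProb S) ^ Fintype.card ι / Real.exp a := by
        rw [← expect_exp_occupancy]
        exact unifProb_le_expect_div (fun ρ => (Real.exp_pos _).le) (Real.exp_pos a)
    _ ≤ Real.exp (2 * q) ^ Fintype.card ι / Real.exp a := by
        gcongr
    _ = Real.exp (2 * q * Fintype.card ι - a) := by
        rw [← Real.exp_nat_mul, ← Real.exp_sub]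
        ring_nf

lemma unifProb_succ_le_occupancy_succ {n : ℕ} (S : Set Ω) (a : ℕ) :
    unifProb {ρ : Fin (n + 1) → Ω | a + 1 ≤ occupancy S ρ} =
      unifProb S * unifProb {ρ : Fin n → Ω | a ≤ occupancy S ρ} +
      (1 - unifProb S) * unifProb {ρ : Fin n → Ω | a + 1 ≤ occupancy S ρ} := by
  have := expect_ite_ite_of_disjoint (Set.disjoint_empty S)
    (unifProb {ρ : Fin n → Ω | a ≤ occupancy S ρ}) 0
    (unifProb {ρ : Fin n → Ω | a + 1 ≤ occupancy S ρ})
  simp only [Set.mem_empty_iff_false, if_false, unifProb_empty, zero_mul, add_zero,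
    sub_zero] at this
  rw [unifProb_fin_succ, ← this]
  refine Finset.expect_congr rfl fun x _ => ?_
  by_cases hx : x ∈ S <;> simp [occupancy_cons, hx]

lemma unifProb_succ_le_occupancy_and_succ {n : ℕ} {S T : Set Ω} (h : Disjoint S T) (a b : ℕ) :
    unifProb {ρ : Fin (n + 1) → Ω | a + 1 ≤ occupancy S ρ ∧ b + 1 ≤ occupancy T ρ} =
      unifProb S * unifProb {ρ : Fin n → Ω | a ≤ occupancy S ρ ∧ b + 1 ≤ occupancy T ρ} +
      unifProb T * unifProb {ρ : Fin n → Ω | a + 1 ≤ occupancy S ρ ∧ b ≤ occupancy T ρ} +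
      (1 - unifProb S - unifProb T) *
        unifProb {ρ : Fin n → Ω | a + 1 ≤ occupancy S ρ ∧ b + 1 ≤ occupancy T ρ} := by
  rw [unifProb_fin_succ, ← expect_ite_ite_of_disjoint h]
  refine Finset.expect_congr rfl fun x _ => ?_
  by_cases hS : x ∈ S
  · simp [occupancy_cons, hS, Set.disjoint_left.mp h hS]
  · by_cases hT : x ∈ T <;> simp [occupancy_cons, hS, hT]

lemma unifProb_le_occupancy_and_le {S T : Set Ω} (h : Disjoint S T) (n a b : ℕ) :
    unifProb {ρ : Fin n → Ω | a ≤ occupancy S ρ ∧ b ≤ occupancy T ρ} ≤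
      unifProb {ρ : Fin n → Ω | a ≤ occupancy S ρ} *
        unifProb {ρ : Fin n → Ω | b ≤ occupancy T ρ} := by
  induction n generalizing a b with
  | zero =>
    cases a
    · simp
    · simp [occupancy]
  | succ n ih =>
    obtain - | a := a
    · simp
    obtain - | b := b
    · simp
    rw [unifProb_succ_le_occupancy_and_succ h, unifProb_succ_le_occupancy_succ,
      unifProb_succ_le_occupancy_succ]
    have hS := unifProb_nonneg S
    have hT := unifProb_nonneg T
    have hneither : 0 ≤ 1 - unifProb S - unifProb T := by
      linarith [unifProb_add_le_one_of_disjoint h]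
    have anti (U : Set Ω) (c : ℕ) : unifProb {ρ : Fin n → Ω | c + 1 ≤ occupancy U ρ} ≤
        unifProb {ρ : Fin n → Ω | c ≤ occupancy U ρ} :=
      unifProb_mono fun ρ hρ => (Nat.le_succ c).trans hρ
    refine (add_le_add (add_le_add (mul_le_mul_of_nonneg_left (ih a (b + 1)) hS)
      (mul_le_mul_of_nonneg_left (ih (a + 1) b) hT))
      (mul_le_mul_of_nonneg_left (ih (a + 1) (b + 1)) hneither)).trans ?_
    -- The slack is the product of the two increments: one ball cannot land in both bins.
    nlinarith [mul_nonneg (mul_nonneg hS hT)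
      (mul_nonneg (sub_nonneg.2 (anti S a)) (sub_nonneg.2 (anti T b)))]

lemma choose_mul_le_unifProb_le_occupancy (S : Set Ω) (n a : ℕ) :
    (n.choose a : ℝ) * unifProb S ^ a * (1 - unifProb S) ^ n ≤
      unifProb {ρ : Fin n → Ω | a ≤ occupancy S ρ} := by
  have hp := unifProb_nonneg S
  have hq : 0 ≤ 1 - unifProb S := sub_nonneg.2 (unifProb_le_one S)
  induction n generalizing a with
  | zero => cases a <;> simp [unifProb_nonneg]
  | succ n ih =>
    obtain - | a := a
    · simpa using pow_le_one₀ hq (by linarith)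
    rw [unifProb_succ_le_occupancy_succ, Nat.choose_succ_succ]
    set p := unifProb S
    have hnonneg : 0 ≤ (n.choose a : ℝ) * p ^ (a + 1) * (1 - p) ^ n := by positivity
    calc ((n.choose a + n.choose (a + 1) : ℕ) : ℝ) * p ^ (a + 1) * (1 - p) ^ (n + 1)
        = (n.choose a * p ^ (a + 1) * (1 - p) ^ n) * (1 - p) +
            (1 - p) * (n.choose (a + 1) * p ^ (a + 1) * (1 - p) ^ n) := by
          push_cast
          ring
      _ ≤ p * (n.choose a * p ^ a * (1 - p) ^ n) +
            (1 - p) * (n.choose (a + 1) * p ^ (a + 1) * (1 - p) ^ n) := by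
          rw [pow_succ] at hnonneg ⊢
          nlinarith
      _ ≤ _ := by
          gcongr <;> exact ih _

lemma div_two_mul_pow_le_choose {n k : ℕ} (hkn : 2 * k ≤ n) :
    ((n : ℝ) / (2 * k)) ^ k ≤ n.choose k := by
  have half_le : (n : ℝ) / 2 ≤ ((n + 1 - k : ℕ) : ℝ) := by
    rw [div_le_iff₀ two_pos]
    exact_mod_cast (by omega : n ≤ (n + 1 - k) * 2)
  calc ((n : ℝ) / (2 * k)) ^ k = (n / 2 : ℝ) ^ k / (k : ℝ) ^ k := by
        rw [← div_div, div_pow]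
    _ ≤ ((n + 1 - k : ℕ) : ℝ) ^ k / (k.factorial : ℝ) := by
        gcongr
        exact_mod_cast k.factorial_le_pow
    _ ≤ n.choose k := Nat.pow_le_choose k n

lemma half_mul_pow_le_unifProb_le_occupancy {S : Set Ω} {n k : ℕ} (hkn : 2 * k ≤ n)
    (hS : n * unifProb S ≤ 1 / 2) :
    1 / 2 * (n * unifProb S / (2 * k)) ^ k ≤ unifProb {ρ : Fin n → Ω | k ≤ occupancy S ρ} := by
  have hp := unifProb_nonneg S
  have half_le : 1 / 2 ≤ (1 - unifProb S) ^ n := by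
    have := one_add_mul_le_pow (a := -unifProb S) (by linarith [unifProb_le_one S]) n
    rw [← sub_eq_add_neg] at this
    linarith
  calc 1 / 2 * (n * unifProb S / (2 * k)) ^ k
      = ((n : ℝ) / (2 * k)) ^ k * unifProb S ^ k * (1 / 2) := by
        rw [← mul_pow]
        ring
    _ ≤ n.choose k * unifProb S ^ k * (1 - unifProb S) ^ n := by
        gcongr
        exact div_two_mul_pow_le_choose hkn
    _ ≤ _ := choose_mul_le_unifProb_le_occupancy S n k

lemma unifProb_forall_occupancy_lt_le_inv {I : Finset ι} (hI : I.Nonempty) {S : ι → Set Ω}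
    (hdisj : ∀ i ∈ I, ∀ j ∈ I, i ≠ j → Disjoint (S i) (S j)) {n k : ℕ} {δ : ℝ} (hδ : 0 < δ)
    (hS : ∀ i ∈ I, δ ≤ unifProb {ρ : Fin n → Ω | k ≤ occupancy (S i) ρ}) :
    unifProb {ρ : Fin n → Ω | ∀ i ∈ I, occupancy (S i) ρ < k} ≤ (I.card * δ)⁻¹ := by
  have hcard : 0 < I.card * δ := mul_pos (mod_cast hI.card_pos) hδ
  have card_mul_le :
      I.card * δ ≤ ∑ i ∈ I, unifProb {ρ : Fin n → Ω | k ≤ occupancy (S i) ρ} := by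
    simpa using Finset.card_nsmul_le_sum I _ δ hS
  refine le_trans ?_ (inv_anti₀ hcard card_mul_le)
  simpa using unifProb_forall_notMem_le_inv I (fun i => {ρ : Fin n → Ω | k ≤ occupancy (S i) ρ})
    (fun i hi j hj hij => unifProb_le_occupancy_and_le (hdisj i hi j hj hij) n k k)
    (hcard.trans_le card_mul_le)

end Occupancy

/-! ### Balls in the torus -/

section Torus

variable {m : ℕ}

lemma val_sub_eq_ite (a b : Fin m) :
    (a - b).val = if b.val ≤ a.val then a.val - b.val else m - (b.val - a.val) := by
  split_ifs with h
  · exact Fin.sub_val_of_le h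
  · rw [Fin.coe_sub_iff_lt.2 (not_le.1 h)]
    omega

lemma cdist_eq_min (a b : Fin m) : cdist a b = min (a - b).val (b - a).val := by
  have sub_mod : ∀ c d : Fin m, (c.val + m - d.val) % m = (c - d).val := by
    intro c d
    rw [Fin.val_sub]
    congr 1
    omega
  rw [cdist, sub_mod, sub_mod]

lemma cdist_comm (a b : Fin m) : cdist a b = cdist b a :=
  min_comm _ _

lemma cdist_triangle (a b c : Fin m) : cdist a c ≤ cdist a b + cdist b c := by
  simp only [cdist_eq_min, val_sub_eq_ite]
  split_ifs <;> omega

lemma torusDist_comm (u v : Node m) : torusDist u v = torusDist v u := by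
  simp only [torusDist, cdist_comm]

lemma torusDist_triangle (u v w : Node m) : torusDist u w ≤ torusDist u v + torusDist v w := by
  have h₁ := cdist_triangle u.1 v.1 w.1
  have h₂ := cdist_triangle u.2 v.2 w.2
  unfold torusDist
  omega

lemma card_filter_val_sub_le (a : Fin m) (r : ℕ) :
    (Finset.univ.filter fun b : Fin m => (b - a).val ≤ r).card = min m (r + 1) := by
  have : NeZero m := ⟨a.pos.ne'⟩
  rw [← Fin.card_filter_val_lt, Finset.card_equiv (Equiv.subRight a)]
  simp

lemma card_filter_val_sub_le' (a : Fin m) (r : ℕ) :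
    (Finset.univ.filter fun b : Fin m => (a - b).val ≤ r).card = min m (r + 1) := by
  have : NeZero m := ⟨a.pos.ne'⟩
  rw [← Fin.card_filter_val_lt, Finset.card_equiv (Equiv.subLeft a)]
  simp

lemma card_filter_cdist_le (a : Fin m) (r : ℕ) :
    (Finset.univ.filter fun b : Fin m => cdist a b ≤ r).card ≤ 2 * r + 2 := by
  simp only [cdist_eq_min, min_le_iff, Finset.filter_or]
  refine (Finset.card_union_le _ _).trans ?_
  rw [card_filter_val_sub_le, card_filter_val_sub_le']
  omega

lemma lt_card_filter_cdist_le (a : Fin m) {r : ℕ} (hr : r < m) :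
    r < (Finset.univ.filter fun b : Fin m => cdist a b ≤ r).card := by
  refine lt_of_lt_of_le ?_ (Finset.card_le_card
    (s := Finset.univ.filter fun b : Fin m => (b - a).val ≤ r) fun b hb => ?_)
  · rw [card_filter_val_sub_le]
    omega
  · simp only [Finset.mem_filter_univ] at hb ⊢
    exact (cdist_eq_min a b).trans_le ((min_le_right _ _).trans hb)

/-- The closed ball of radius `r` around `v` in the torus metric. -/
def torusBall (v : Node m) (r : ℕ) : Finset (Node m) :=
  Finset.univ.filter fun u => torusDist v u ≤ r

@[simp]
lemma mem_torusBall {u v : Node m} {r : ℕ} : u ∈ torusBall v r ↔ torusDist v u ≤ r := by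
  simp [torusBall]

lemma card_torusBall_le (v : Node m) (r : ℕ) : (torusBall v r).card ≤ (2 * r + 2) ^ 2 := by
  have ball_subset : torusBall v r ⊆ (Finset.univ.filter fun b : Fin m => cdist v.1 b ≤ r) ×ˢ
      (Finset.univ.filter fun b : Fin m => cdist v.2 b ≤ r) := by
    intro u hu
    rw [mem_torusBall, torusDist] at hu
    simp only [Finset.mem_product, Finset.mem_filter_univ]
    omega
  refine (Finset.card_le_card ball_subset).trans ?_
  rw [Finset.card_product, sq]
  exact Nat.mul_le_mul (card_filter_cdist_le _ _) (card_filter_cdist_le _ _)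

lemma sq_le_card_torusBall (v : Node m) {r : ℕ} (hr : r < m) :
    (r + 1) ^ 2 ≤ (torusBall v (2 * r)).card := by
  have subset_ball : (Finset.univ.filter fun b : Fin m => cdist v.1 b ≤ r) ×ˢ
      (Finset.univ.filter fun b : Fin m => cdist v.2 b ≤ r) ⊆ torusBall v (2 * r) := by
    intro u hu
    simp only [Finset.mem_product, Finset.mem_filter_univ] at hu
    rw [mem_torusBall, torusDist]
    omega
  refine le_trans ?_ (Finset.card_le_card subset_ball)
  rw [Finset.card_product, sq]
  exact Nat.mul_le_mul (lt_card_filter_cdist_le _ hr) (lt_card_filter_cdist_le _ hr)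

lemma exists_sq_le_le_succ_sq {x : ℝ} (hx : 1 ≤ x) :
    ∃ r : ℕ, (1 : ℝ) ≤ r ∧ (r : ℝ) ^ 2 ≤ x ∧ x ≤ ((r : ℝ) + 1) ^ 2 := by
  have hx₀ : 0 ≤ x := zero_le_one.trans hx
  refine ⟨⌊√x⌋₊, ?_, ?_, ?_⟩
  · exact_mod_cast Nat.le_floor (by simpa using Real.one_le_sqrt.2 hx)
  · exact (Real.le_sqrt (Nat.cast_nonneg _) hx₀).1 (Nat.floor_le (Real.sqrt_nonneg x))
  · exact (Real.sqrt_le_left (by positivity)).1 (Nat.lt_floor_add_one √x).le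

lemma exists_card_torusBall_le {x : ℝ} (hx : 1 ≤ x) (hxm : x < m ^ 2) :
    ∃ r < m, x ≤ ((r : ℝ) + 1) ^ 2 ∧ ∀ v : Node m,
      ((torusBall v (2 * r)).card : ℝ) ≤ 36 * x ∧ ((torusBall v (4 * r)).card : ℝ) ≤ 100 * x := by
  obtain ⟨r, one_le_r, r_sq_le, le_succ_sq⟩ := exists_sq_le_le_succ_sq hx
  have r_lt : (r : ℝ) < m := lt_of_pow_lt_pow_left₀ 2 m.cast_nonneg (r_sq_le.trans_lt hxm)
  have card_le : ∀ (v : Node m) (D : ℕ), ((torusBall v D).card : ℝ) ≤ (2 * D + 2) ^ 2 :=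
    fun v D => mod_cast card_torusBall_le v D
  refine ⟨r, mod_cast r_lt, le_succ_sq, fun v =>
    ⟨(card_le v _).trans ?_, (card_le v _).trans ?_⟩⟩ <;>
  · push_cast
    nlinarith

end Torus

/-! ### Random placements -/

section Placement

lemma card_image_sdiff_add_occupancy {ι Ω : Type*} [Fintype ι] [DecidableEq Ω] {x : ι → Ω}
    (hx : Function.Injective x) (F : Finset Ω) :
    (Finset.univ.image x \ F).card + occupancy (F : Set Ω) x = Fintype.card ι := by
  rw [Finset.sdiff_eq_filter, Finset.filter_image, Finset.card_image_of_injective _ hx, add_comm]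
  simpa [occupancy] using
    Finset.card_filter_add_card_filter_not (s := Finset.univ) fun t => x t ∈ F

lemma unifProb_two_mul_card_image_sdiff_lt_le {Ω : Type*} [Fintype Ω] [DecidableEq Ω]
    [Nonempty Ω] {F : Finset Ω} (hF : 8 * F.card ≤ Fintype.card Ω) (M : ℕ) :
    unifProb {x : Fin M → Ω | 2 * (Finset.univ.image x \ F).card < M} ≤
      Real.exp (-(M / 4)) + (M : ℝ) ^ 2 / Fintype.card Ω := by
  have unifProb_F_le : unifProb (F : Set Ω) ≤ 1 / 8 := by
    rw [unifProb_coe_finset, div_le_div_iff₀ (mod_cast Fintype.card_pos) (by norm_num)]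
    exact_mod_cast (by omega : F.card * 8 ≤ 1 * Fintype.card Ω)
  have tail := unifProb_le_occupancy_le_exp (ι := Fin M) unifProb_F_le (M / 2)
  calc unifProb {x : Fin M → Ω | 2 * (Finset.univ.image x \ F).card < M}
      ≤ unifProb ({x : Fin M → Ω | (M / 2 : ℝ) ≤ occupancy F x} ∪
          {x | ¬ Function.Injective x}) := by
        refine unifProb_mono fun x (hx : 2 * (Finset.univ.image x \ F).card < M) => ?_
        refine or_iff_not_imp_right.2 fun hinj => ?_
        have card_add := card_image_sdiff_add_occupancy (not_not.1 hinj) F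
        rw [Fintype.card_fin] at card_add
        rw [Set.mem_ofPred_eq, div_le_iff₀ two_pos]
        exact_mod_cast (by omega : M ≤ occupancy F x * 2)
    _ ≤ Real.exp (2 * (1 / 8) * Fintype.card (Fin M) - M / 2) +
          (M : ℝ) ^ 2 / Fintype.card Ω :=
        (unifProb_union_le _ _).trans (add_le_add tail (unifProb_not_injective_le M))
    _ = Real.exp (-(M / 4)) + (M : ℝ) ^ 2 / Fintype.card Ω := by
        rw [Fintype.card_fin]
        ring_nf

variable {m M K : ℕ}

/-- The set of files cached at `v`. -/
def cachedFiles (ω : Placement m M K) (v : Node m) : Finset (Fin K) :=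
  Finset.univ.image (ω v)

lemma mem_cachedFiles {ω : Placement m M K} {v : Node m} {j : Fin K} :
    j ∈ cachedFiles ω v ↔ cached ω v j := by
  simp [cachedFiles, cached]

lemma card_cachedFiles_le (ω : Placement m M K) (v : Node m) : (cachedFiles ω v).card ≤ M :=
  Finset.card_image_le.trans (by simp)

/-- The files cached at `v` and at no other node within distance `r` of `v`; a request for such a
file that originates well inside this ball must be served by `v`. -/
noncomputable def privateFiles (ω : Placement m M K) (v : Node m) (r : ℕ) : Finset (Fin K) :=
  cachedFiles ω v \ ((torusBall v r).erase v).biUnion (cachedFiles ω)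

lemma cached_of_mem_privateFiles {ω : Placement m M K} {v : Node m} {r : ℕ} {j : Fin K}
    (hj : j ∈ privateFiles ω v r) : cached ω v j :=
  mem_cachedFiles.1 (Finset.mem_sdiff.1 hj).1

lemma eq_of_mem_privateFiles {ω : Placement m M K} {v w : Node m} {r : ℕ} {j : Fin K}
    (hj : j ∈ privateFiles ω v r) (hw : cached ω w j) (hvw : torusDist v w ≤ r) : w = v := by
  by_contra hne
  exact (Finset.mem_sdiff.1 hj).2 (Finset.mem_biUnion.2
    ⟨w, Finset.mem_erase.2 ⟨hne, mem_torusBall.2 hvw⟩, mem_cachedFiles.2 hw⟩)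

lemma card_privateFiles_le (ω : Placement m M K) (v : Node m) (r : ℕ) :
    (privateFiles ω v r).card ≤ M :=
  (Finset.card_le_card Finset.sdiff_subset).trans (card_cachedFiles_le ω v)

lemma privateFiles_update (ω : Placement m M K) (v : Node m) (r : ℕ) (x : Fin M → Fin K) :
    privateFiles (Function.update ω v x) v r =
      Finset.univ.image x \ ((torusBall v r).erase v).biUnion (cachedFiles ω) := by
  unfold privateFiles cachedFiles
  rw [Function.update_self]
  congr 1
  refine Finset.biUnion_congr rfl fun w hw => ?_
  rw [Function.update_of_ne (Finset.ne_of_mem_erase hw)]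

lemma unifProb_two_mul_card_privateFiles_lt_le [NeZero K] (v : Node m) {r : ℕ}
    (hr : 8 * ((torusBall v r).card * M) ≤ K) :
    unifProb {ω : Placement m M K | 2 * (privateFiles ω v r).card < M} ≤
      Real.exp (-(M / 4)) + (M : ℝ) ^ 2 / K := by
  refine unifProb_le_of_forall_update _ v fun ω => ?_
  have card_others : (((torusBall v r).erase v).biUnion (cachedFiles ω)).card ≤
      (torusBall v r).card * M :=
    (Finset.card_biUnion_le_card_mul _ _ M fun w _ => card_cachedFiles_le ω w).trans
      (Nat.mul_le_mul_right M Finset.card_erase_le)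
  have bound := unifProb_two_mul_card_image_sdiff_lt_le
    (F := ((torusBall v r).erase v).biUnion (cachedFiles ω)) (by rw [Fintype.card_fin]; omega) M
  rw [Fintype.card_fin] at bound
  simpa only [Set.mem_ofPred_eq, privateFiles_update] using bound

/-- The nodes at least half of whose `M` cache slots hold distinct private files. -/
noncomputable def richNodes (ω : Placement m M K) (r : ℕ) : Finset (Node m) :=
  Finset.univ.filter fun v => M ≤ 2 * (privateFiles ω v r).card

lemma unifProb_two_mul_card_richNodes_lt_le [NeZero m] {r : ℕ} {δ : ℝ}
    (h : ∀ v : Node m, unifProb {ω : Placement m M K | 2 * (privateFiles ω v r).card < M} ≤ δ) :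
    unifProb {ω : Placement m M K | 2 * (richNodes ω r).card < m ^ 2} ≤ 2 * δ := by
  simpa [richNodes, ← sq] using unifProb_two_mul_card_notMem_lt_le h

/-- Every file has a replica within distance `D` of every node. -/
def Covers (ω : Placement m M K) (D : ℕ) : Prop :=
  ∀ u j, ∃ w ∈ torusBall u D, cached ω w j

lemma unifProb_forall_ne_le_exp [NeZero K] (j : Fin K) :
    unifProb {x : Fin M → Fin K | ∀ i, x i ≠ j} ≤ Real.exp (-(M / K)) := by
  have prob_ne : unifProb ({j}ᶜ : Set (Fin K)) = 1 - 1 / K := by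
    have prob_eq := unifProb_coe_finset {j}
    rw [Finset.coe_singleton, Finset.card_singleton, Fintype.card_fin, Nat.cast_one] at prob_eq
    rw [unifProb_compl, prob_eq]
  calc unifProb {x : Fin M → Fin K | ∀ i, x i ≠ j} = (1 - 1 / K : ℝ) ^ M := by
        simpa [prob_ne] using unifProb_forall_mem fun _ : Fin M => ({j}ᶜ : Set (Fin K))
    _ ≤ Real.exp (-(1 / K)) ^ M := by
        gcongr
        · exact prob_ne ▸ unifProb_nonneg _
        · exact Real.one_sub_le_exp_neg _
    _ = Real.exp (-(M / K)) := by
        rw [← Real.exp_nat_mul]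
        ring_nf

lemma unifProb_forall_mem_not_cached_le_exp [NeZero K] (S : Finset (Node m)) (j : Fin K) :
    unifProb {ω : Placement m M K | ∀ u ∈ S, ¬ cached ω u j} ≤
      Real.exp (-(M * S.card / K)) := by
  set A : Node m → Set (Fin M → Fin K) := fun u =>
    if u ∈ S then {x | ∀ i, x i ≠ j} else Set.univ with hA
  have prob_A : ∀ u, unifProb (A u) ≤ if u ∈ S then Real.exp (-(M / K)) else 1 := by
    intro u
    by_cases hu : u ∈ S <;> simp only [hA, hu, if_true, if_false, unifProb_univ, le_refl]
    exact unifProb_forall_ne_le_exp j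
  calc unifProb {ω : Placement m M K | ∀ u ∈ S, ¬ cached ω u j}
      = unifProb {ω : Placement m M K | ∀ u, ω u ∈ A u} := by
        congr 1
        ext ω
        refine forall_congr' fun u => ?_
        by_cases hu : u ∈ S <;> simp [hA, hu, cached]
    _ = ∏ u, unifProb (A u) := unifProb_forall_mem A
    _ ≤ ∏ u, if u ∈ S then Real.exp (-(M / K)) else 1 :=
        Finset.prod_le_prod (fun u _ => unifProb_nonneg _) fun u _ => prob_A u
    _ = Real.exp (-(M * S.card / K)) := by
        rw [Finset.prod_ite_mem, Finset.univ_inter, Finset.prod_const, ← Real.exp_nat_mul]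
        ring_nf

lemma unifProb_not_covers_le [NeZero K] {R : ℕ} (hR : R < m) :
    unifProb {ω : Placement m M K | ¬ Covers ω (2 * R)} ≤
      (m : ℝ) ^ 2 * K * Real.exp (-(M * (R + 1) ^ 2 / K)) := by
  have not_covers_at : ∀ p : Node m × Fin K,
      unifProb {ω : Placement m M K | ∀ w ∈ torusBall p.1 (2 * R), ¬ cached ω w p.2} ≤
        Real.exp (-(M * (R + 1) ^ 2 / K)) := by
    intro p
    refine (unifProb_forall_mem_not_cached_le_exp _ _).trans ?_
    gcongr
    exact_mod_cast sq_le_card_torusBall p.1 hR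
  convert unifProb_exists_le_card_mul _ not_covers_at using 2
  · ext ω
    simp [Covers]
  · simp [sq]

end Placement

/-! ### Requests for a fixed placement -/

section Requests

variable {m M K n : ℕ}

lemma maxLoad_eq_sup_occupancy (A : Fin n → Node m) :
    maxLoad A = Finset.univ.sup fun v => occupancy {v} A := by
  simp only [maxLoad, occupancy, Set.mem_singleton_iff]

lemma exists_validAssign {ω : Placement m M K} {D : ℕ} (hω : Covers ω D)
    (ρ : Fin n → Node m × Fin K) : ∃ A, validAssign ω ρ A := by
  have exists_nearest : ∀ t, ∃ w, cached ω w (ρ t).2 ∧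
      ∀ v, cached ω v (ρ t).2 → torusDist (ρ t).1 w ≤ torusDist (ρ t).1 v := by
    intro t
    obtain ⟨w, -, hw⟩ := hω (ρ t).1 (ρ t).2
    exact Set.exists_min_image {w | cached ω w (ρ t).2} (torusDist (ρ t).1) (Set.toFinite _) ⟨w, hw⟩
  choose A hA using exists_nearest
  exact ⟨A, hA⟩

lemma torusDist_le_of_validAssign {ω : Placement m M K} {D : ℕ} (hω : Covers ω D)
    {ρ : Fin n → Node m × Fin K} {A : Fin n → Node m} (hA : validAssign ω ρ A) (t : Fin n) :
    torusDist (ρ t).1 (A t) ≤ D := by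
  obtain ⟨w, hw, hcached⟩ := hω (ρ t).1 (ρ t).2
  exact ((hA t).2 w hcached).trans (mem_torusBall.1 hw)

/-- The requests that `v` can possibly serve when no request travels further than `D`. -/
def outerCell (ω : Placement m M K) (D : ℕ) (v : Node m) : Finset (Node m × Fin K) :=
  torusBall v D ×ˢ cachedFiles ω v

/-- Requests that only `v` can serve: a replica at distance at most `r` from the origin lies within
`2 * r` of `v`, where `v` has no competitor for its private files. -/
noncomputable def innerCell (ω : Placement m M K) (r : ℕ) (v : Node m) :
    Finset (Node m × Fin K) :=
  torusBall v r ×ˢ privateFiles ω v (2 * r)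

lemma pairwise_disjoint_innerCell (ω : Placement m M K) (r : ℕ) {v w : Node m} (hvw : v ≠ w) :
    Disjoint (innerCell ω r v) (innerCell ω r w) := by
  refine Finset.disjoint_left.2 fun x hv hw => hvw ?_
  simp only [innerCell, Finset.mem_product, mem_torusBall] at hv hw
  refine (eq_of_mem_privateFiles hv.2 (cached_of_mem_privateFiles hw.2) ?_).symm
  have triangle := torusDist_triangle v x.1 w
  rw [torusDist_comm x.1 w] at triangle
  omega

lemma exists_maxLoad_le_occupancy_outerCell [NeZero m] {ω : Placement m M K} {D : ℕ}
    (hω : Covers ω D) {ρ : Fin n → Node m × Fin K} {A : Fin n → Node m}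
    (hA : validAssign ω ρ A) :
    ∃ v, maxLoad A ≤ occupancy (outerCell ω D v : Set (Node m × Fin K)) ρ := by
  obtain ⟨v, -, hv⟩ := Finset.exists_mem_eq_sup (Finset.univ : Finset (Node m))
    Finset.univ_nonempty fun v => occupancy {v} A
  refine ⟨v, (maxLoad_eq_sup_occupancy A).trans_le (hv.trans_le (occupancy_le_occupancy ?_))⟩
  rintro t rfl
  have dist_le := torusDist_le_of_validAssign hω hA t
  rw [torusDist_comm] at dist_le
  exact Finset.mem_coe.2 (Finset.mem_product.2
    ⟨mem_torusBall.2 dist_le, mem_cachedFiles.2 (hA t).1⟩)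

lemma occupancy_innerCell_le_maxLoad {ω : Placement m M K} {ρ : Fin n → Node m × Fin K}
    {A : Fin n → Node m} (hA : validAssign ω ρ A) (r : ℕ) (v : Node m) :
    occupancy (innerCell ω r v : Set (Node m × Fin K)) ρ ≤ maxLoad A := by
  rw [maxLoad_eq_sup_occupancy]
  refine le_trans (occupancy_le_occupancy fun t ht => ?_)
    (Finset.le_sup (f := fun v => occupancy {v} A) (Finset.mem_univ v))
  obtain ⟨hnear, hprivate⟩ := Finset.mem_product.1 (Finset.mem_coe.1 ht)
  rw [mem_torusBall] at hnear
  refine eq_of_mem_privateFiles hprivate (hA t).1 ?_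
  have nearest := (hA t).2 v (cached_of_mem_privateFiles hprivate)
  have triangle := torusDist_triangle v (ρ t).1 (A t)
  rw [torusDist_comm (ρ t).1 v] at nearest
  omega

/-- Strategy I can serve all requests, and its maximum load lies in `[lo, hi]` however ties are
broken. -/
def LoadWithin (ω : Placement m M K) (ρ : Fin n → Node m × Fin K) (lo hi : ℝ) : Prop :=
  (∃ A, validAssign ω ρ A) ∧
    ∀ A, validAssign ω ρ A → lo ≤ (maxLoad A : ℝ) ∧ (maxLoad A : ℝ) ≤ hi

lemma LoadWithin.mono_left {ω : Placement m M K} {ρ : Fin n → Node m × Fin K} {lo lo' hi : ℝ}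
    (h : LoadWithin ω ρ lo hi) (hlo : lo' ≤ lo) : LoadWithin ω ρ lo' hi :=
  ⟨h.1, fun A hA => (h.2 A hA).imp_left hlo.trans⟩

lemma loadWithin_of_occupancy [NeZero m] {ω : Placement m M K} {D : ℕ} (hω : Covers ω D)
    {ρ : Fin n → Node m × Fin K} {r k : ℕ} {hi : ℝ}
    (hinner : ∃ v, k ≤ occupancy (innerCell ω r v : Set (Node m × Fin K)) ρ)
    (houter : ∀ v, (occupancy (outerCell ω D v : Set (Node m × Fin K)) ρ : ℝ) ≤ hi) :
    LoadWithin ω ρ k hi := by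
  refine ⟨exists_validAssign hω ρ, fun A hA => ⟨?_, ?_⟩⟩
  · obtain ⟨v, hv⟩ := hinner
    exact_mod_cast hv.trans (occupancy_innerCell_le_maxLoad hA r v)
  · obtain ⟨v, hv⟩ := exists_maxLoad_le_occupancy_outerCell hω hA
    exact (Nat.cast_le.2 hv).trans (houter v)

lemma unifProb_coe_product (S : Finset (Node m)) (F : Finset (Fin K)) :
    unifProb ((S ×ˢ F : Finset (Node m × Fin K)) : Set (Node m × Fin K)) =
      S.card * F.card / (m ^ 2 * K) := by
  rw [unifProb_coe_finset]
  simp [sq]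

lemma unifProb_outerCell_le (ω : Placement m M K) (D : ℕ) (v : Node m) :
    unifProb (outerCell ω D v : Set (Node m × Fin K)) ≤
      (torusBall v D).card * M / (m ^ 2 * K) := by
  rw [outerCell, unifProb_coe_product]
  gcongr
  exact card_cachedFiles_le ω v

lemma unifProb_innerCell_le (ω : Placement m M K) (r : ℕ) (v : Node m) :
    unifProb (innerCell ω r v : Set (Node m × Fin K)) ≤
      (torusBall v r).card * M / (m ^ 2 * K) := by
  rw [innerCell, unifProb_coe_product]
  gcongr
  exact card_privateFiles_le ω v _

lemma le_unifProb_innerCell {ω : Placement m M K} {r : ℕ} {v : Node m}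
    (hv : v ∈ richNodes ω (2 * r)) :
    (torusBall v r).card * (M / 2) / (m ^ 2 * K) ≤
      unifProb (innerCell ω r v : Set (Node m × Fin K)) := by
  rw [innerCell, unifProb_coe_product]
  gcongr
  rw [div_le_iff₀ two_pos, mul_comm]
  exact_mod_cast (Finset.mem_filter.1 hv).2

lemma unifProb_exists_le_occupancy_outerCell_le [NeZero m] [NeZero K] (ω : Placement m M K)
    {D : ℕ} {q : ℝ} (hq : ∀ v : Node m, (torusBall v D).card * M / (m ^ 2 * K) ≤ q) (a : ℝ) :
    unifProb {ρ : Fin n → Node m × Fin K |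
      ∃ v, a ≤ occupancy (outerCell ω D v : Set (Node m × Fin K)) ρ} ≤
      m ^ 2 * Real.exp (2 * q * n - a) := by
  have tail : ∀ v, unifProb {ρ : Fin n → Node m × Fin K |
      a ≤ occupancy (outerCell ω D v : Set (Node m × Fin K)) ρ} ≤ Real.exp (2 * q * n - a) := by
    intro v
    simpa using unifProb_le_occupancy_le_exp (ι := Fin n)
      ((unifProb_outerCell_le ω D v).trans (hq v)) a
  simpa [← sq] using unifProb_exists_le_card_mul _ tail

lemma unifProb_forall_occupancy_innerCell_lt_le [NeZero m] [NeZero K] {ω : Placement m M K}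
    {r k : ℕ} {p : ℝ} (hrich : m ^ 2 ≤ 2 * (richNodes ω (2 * r)).card) (hk : 0 < k)
    (hkn : 2 * k ≤ n) (hp : 0 < p)
    (hlo : ∀ v : Node m, p ≤ n * ((torusBall v r).card * (M / 2) / (m ^ 2 * K)))
    (hhi : ∀ v : Node m, n * ((torusBall v r).card * M / (m ^ 2 * K) : ℝ) ≤ 1 / 2) :
    unifProb {ρ : Fin n → Node m × Fin K | ∀ v ∈ richNodes ω (2 * r),
      occupancy (innerCell ω r v : Set (Node m × Fin K)) ρ < k} ≤
      4 / m ^ 2 * (2 * k / p) ^ k := by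
  have hm : 0 < m ^ 2 := pow_pos (NeZero.pos m) 2
  have rich_nonempty : (richNodes ω (2 * r)).Nonempty := Finset.card_pos.1 (by omega)
  have heavy : ∀ v ∈ richNodes ω (2 * r), 1 / 2 * (p / (2 * k)) ^ k ≤
      unifProb {ρ : Fin n → Node m × Fin K |
        k ≤ occupancy (innerCell ω r v : Set (Node m × Fin K)) ρ} := by
    intro v hv
    refine le_trans ?_ (half_mul_pow_le_unifProb_le_occupancy hkn
      ((mul_le_mul_of_nonneg_left (unifProb_innerCell_le ω r v) n.cast_nonneg).trans (hhi v)))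
    gcongr
    exact (hlo v).trans (mul_le_mul_of_nonneg_left (le_unifProb_innerCell hv) n.cast_nonneg)
  refine (unifProb_forall_occupancy_lt_le_inv rich_nonempty
    (fun v _ w _ hvw => Finset.disjoint_coe.2 (pairwise_disjoint_innerCell ω r hvw))
    (by positivity) heavy).trans ?_
  have half_le_card : (m : ℝ) ^ 2 / 2 ≤ (richNodes ω (2 * r)).card := by
    rw [div_le_iff₀ two_pos, mul_comm]
    exact_mod_cast hrich
  have m_pos : (0 : ℝ) < m := mod_cast NeZero.pos m
  calc ((richNodes ω (2 * r)).card * (1 / 2 * (p / (2 * k)) ^ k))⁻¹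
      ≤ ((m : ℝ) ^ 2 / 2 * (1 / 2 * (p / (2 * k)) ^ k))⁻¹ := by gcongr
    _ = 4 / m ^ 2 * (2 * k / p) ^ k := by
      rw [← inv_div p (2 * (k : ℝ)), inv_pow]
      field_simp
      norm_num

end Requests

/-! ### As many files as nodes -/

section SquareLibrary

variable {m M : ℕ} [NeZero m] {L : ℝ}

lemma one_le_log_of_three_le (hL : 3 ≤ L) : 1 ≤ Real.log L := by
  rw [Real.le_log_iff_exp_le (by linarith)]
  linarith [Real.exp_one_lt_d9]

lemma ceil_mul_log_le (hL : 1 < L) (hlog : 8 * Real.log L ≤ L) :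
    ⌈1 / 8 * L / Real.log L⌉₊ * Real.log L ≤ L / 4 := by
  have log_pos : 0 < Real.log L := Real.log_pos hL
  have one_le : 1 ≤ 1 / 8 * L / Real.log L := by
    rw [one_le_div log_pos]
    linarith
  calc ⌈1 / 8 * L / Real.log L⌉₊ * Real.log L
      ≤ 2 * (1 / 8 * L / Real.log L) * Real.log L := by
        gcongr
        exact Nat.ceil_le_two_mul (by linarith)
    _ = L / 4 := by
        field_simp
        norm_num

lemma exists_covering_radius (hexp : Real.exp L = m ^ 2) (hL : 1 ≤ L) (hLM : 4 * L < M)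
    (hM : M ≤ m ^ 2) :
    ∃ D : ℕ, unifProb {ω : Placement m M (m ^ 2) | ¬ Covers ω D} ≤ Real.exp (-(2 * L)) ∧
      ∀ v : Node m, (torusBall v D).card * (M : ℝ) ≤ 144 * L * m ^ 2 := by
  have m_pos : (0 : ℝ) < m := mod_cast NeZero.pos m
  have M_pos : (0 : ℝ) < M := by linarith
  have M_le : (M : ℝ) ≤ m ^ 2 := mod_cast hM
  obtain ⟨R, R_lt, le_sq, card_le⟩ := exists_card_torusBall_le (m := m) (x := 4 * L * m ^ 2 / M)
    (by rw [one_le_div M_pos]; nlinarith)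
    (by rw [div_lt_iff₀ M_pos, mul_comm]; gcongr)
  refine ⟨2 * R, (unifProb_not_covers_le R_lt).trans ?_, fun v => ?_⟩
  · calc (m : ℝ) ^ 2 * (m ^ 2 : ℕ) * Real.exp (-(M * (R + 1) ^ 2 / (m ^ 2 : ℕ)))
        ≤ Real.exp L * Real.exp L * Real.exp (-(4 * L)) := by
          rw [div_le_iff₀ M_pos] at le_sq
          rw [Nat.cast_pow, hexp]
          gcongr
          rw [le_div_iff₀ (by positivity)]
          linarith
      _ = Real.exp (-(2 * L)) := by
          rw [← Real.exp_add, ← Real.exp_add]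
          ring_nf
  · calc (torusBall v (2 * R)).card * (M : ℝ) ≤ 36 * (4 * L * m ^ 2 / M) * M := by
          gcongr
          exact (card_le v).1
      _ = 144 * L * m ^ 2 := by
          field_simp
          norm_num

lemma exists_private_radius (hM : 0 < M) (hMm : 800 * M ≤ m ^ 2) :
    ∃ r : ℕ, unifProb {ω : Placement m M (m ^ 2) | 2 * (richNodes ω (2 * r)).card < m ^ 2} ≤
        2 * (Real.exp (-(M / 4)) + (M : ℝ) ^ 2 / m ^ 2) ∧
      ∀ v : Node m, (m : ℝ) ^ 2 ≤ 800 * ((torusBall v r).card * M) ∧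
        2 * ((torusBall v r).card * M) ≤ (m : ℝ) ^ 2 := by
  have m_pos : (0 : ℝ) < m := mod_cast NeZero.pos m
  have one_le_M : (1 : ℝ) ≤ M := mod_cast hM
  have M_le : 800 * (M : ℝ) ≤ m ^ 2 := mod_cast hMm
  -- A ball of radius `4 * s` has at most `100 * m ^ 2 / (800 * M)` nodes, which cache at most an
  -- eighth of the library.
  obtain ⟨s, s_lt, le_sq, card_le⟩ := exists_card_torusBall_le (m := m) (x := m ^ 2 / (800 * M))
    ((one_le_div (by positivity)).2 M_le) (div_lt_self (by positivity) (by linarith))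
  have mul_M : ∀ c : ℝ, c * (m ^ 2 / (800 * M)) * M = c / 800 * m ^ 2 := fun c => by field_simp
  refine ⟨2 * s, ?_, fun v => ⟨?_, ?_⟩⟩
  · refine unifProb_two_mul_card_richNodes_lt_le fun v => ?_
    have few_files : 8 * ((torusBall v (4 * s)).card * (M : ℝ)) ≤ m ^ 2 := by
      have := mul_le_mul_of_nonneg_right (card_le v).2 (zero_le_one.trans one_le_M)
      rw [mul_M] at this
      linarith
    rw [← mul_assoc]
    exact_mod_cast unifProb_two_mul_card_privateFiles_lt_le v (mod_cast few_files)
  · have le_card : (m : ℝ) ^ 2 / (800 * M) ≤ (torusBall v (2 * s)).card :=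
      le_sq.trans (mod_cast sq_le_card_torusBall v s_lt)
    rw [div_le_iff₀ (by positivity)] at le_card
    linarith
  · have := mul_le_mul_of_nonneg_right (card_le v).1 (zero_le_one.trans one_le_M)
    rw [mul_M] at this
    nlinarith

lemma unifProb_exists_mul_log_le_occupancy_outerCell_le (hexp : Real.exp L = m ^ 2)
    (ω : Placement m M (m ^ 2)) {D : ℕ}
    (hD : ∀ v : Node m, (torusBall v D).card * (M : ℝ) ≤ 144 * L * m ^ 2) :
    unifProb {ρ : Fin (m ^ 2) → Node m × Fin (m ^ 2) |
      ∃ v, 291 * L ≤ occupancy (outerCell ω D v : Set (Node m × Fin (m ^ 2))) ρ} ≤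
      Real.exp (-(2 * L)) := by
  have m_pos : (0 : ℝ) < m := mod_cast NeZero.pos m
  have outer_le : ∀ v : Node m,
      (torusBall v D).card * (M : ℝ) / (m ^ 2 * (m ^ 2 : ℕ)) ≤ 144 * L / m ^ 2 := by
    intro v
    rw [Nat.cast_pow, ← div_div]
    gcongr
    exact (div_le_iff₀ (by positivity)).2 (hD v)
  calc _ ≤ m ^ 2 * Real.exp (2 * (144 * L / m ^ 2) * (m ^ 2 : ℕ) - 291 * L) :=
        unifProb_exists_le_occupancy_outerCell_le ω outer_le (291 * L)
    -- `291 = 2 * 144 + 3` leaves `exp (-3 * L)` for each of the `exp L` nodes.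
    _ = Real.exp L * Real.exp (288 * L - 291 * L) := by
        rw [hexp, Nat.cast_pow]
        congr 3
        field_simp
        ring
    _ = Real.exp (-(2 * L)) := by
        rw [← Real.exp_add]
        ring_nf

lemma unifProb_forall_occupancy_innerCell_lt_le_exp (hexp : Real.exp L = m ^ 2)
    {ω : Placement m M (m ^ 2)} {r k : ℕ} (hrich : m ^ 2 ≤ 2 * (richNodes ω (2 * r)).card)
    (hr : ∀ v : Node m, (m : ℝ) ^ 2 ≤ 800 * ((torusBall v r).card * M) ∧
      2 * ((torusBall v r).card * M) ≤ (m : ℝ) ^ 2)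
    (hk : 0 < k) (hkm : 2 * k ≤ m ^ 2) (hkL : (3200 * (k : ℝ)) ^ k ≤ Real.exp (L / 2)) :
    unifProb {ρ : Fin (m ^ 2) → Node m × Fin (m ^ 2) | ∀ v ∈ richNodes ω (2 * r),
      occupancy (innerCell ω r v : Set (Node m × Fin (m ^ 2))) ρ < k} ≤
      4 * Real.exp (-(L / 2)) := by
  have m_pos : (0 : ℝ) < m := mod_cast NeZero.pos m
  have cancel : ∀ c : ℝ, (m ^ 2 : ℕ) * (c / (m ^ 2 * (m ^ 2 : ℕ))) = c / m ^ 2 := by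
    intro c
    push_cast
    field_simp
  calc _ ≤ 4 / (m : ℝ) ^ 2 * (2 * k / (1 / 1600)) ^ k := by
        refine unifProb_forall_occupancy_innerCell_lt_le hrich hk hkm (by norm_num)
          (fun v => ?_) fun v => ?_
        · rw [cancel, le_div_iff₀ (by positivity)]
          linarith [(hr v).1]
        · rw [cancel, div_le_iff₀ (by positivity)]
          linarith [(hr v).2]
    _ = 4 / Real.exp L * (3200 * k) ^ k := by
        rw [hexp]
        ring_nf
    _ ≤ 4 / Real.exp L * Real.exp (L / 2) := by gcongr
    _ = 4 * Real.exp (-(L / 2)) := by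
        rw [div_mul_eq_mul_div, mul_div_assoc, ← Real.exp_sub]
        ring_nf

lemma unifProb_not_loadWithin_le_of_covers (hexp : Real.exp L = m ^ 2)
    {ω : Placement m M (m ^ 2)} {k D r : ℕ} (hcovers : Covers ω D)
    (hD : ∀ v : Node m, (torusBall v D).card * (M : ℝ) ≤ 144 * L * m ^ 2)
    (hrich : m ^ 2 ≤ 2 * (richNodes ω (2 * r)).card)
    (hr : ∀ v : Node m, (m : ℝ) ^ 2 ≤ 800 * ((torusBall v r).card * M) ∧
      2 * ((torusBall v r).card * M) ≤ (m : ℝ) ^ 2)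
    (hk : 0 < k) (hkm : 2 * k ≤ m ^ 2) (hkL : (3200 * (k : ℝ)) ^ k ≤ Real.exp (L / 2)) :
    unifProb {ρ : Fin (m ^ 2) → Node m × Fin (m ^ 2) | ¬ LoadWithin ω ρ k (291 * L)} ≤
      Real.exp (-(2 * L)) + 4 * Real.exp (-(L / 2)) := by
  refine (unifProb_mono fun ρ hρ => ?_).trans ((unifProb_union_le _ _).trans (add_le_add
    (unifProb_exists_mul_log_le_occupancy_outerCell_le hexp ω hD)
    (unifProb_forall_occupancy_innerCell_lt_le_exp hexp hrich hr hk hkm hkL)))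
  by_contra hnot
  simp only [Set.mem_union, Set.mem_ofPred_eq, not_or, not_exists, not_forall, not_lt,
    not_le] at hnot
  obtain ⟨below, v, -, above⟩ := hnot
  exact hρ (loadWithin_of_occupancy hcovers ⟨v, above⟩ fun v => (below v).le)

lemma unifProb_not_loadWithin_le {k : ℕ} (hexp : Real.exp L = m ^ 2) (hL : 1 ≤ L)
    (hLM : 4 * L < M) (hM : 800 * M ≤ m ^ 2) (hk : 0 < k) (hkm : 2 * k ≤ m ^ 2)
    (hkL : (3200 * (k : ℝ)) ^ k ≤ Real.exp (L / 2)) :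
    unifProb {x : Placement m M (m ^ 2) × (Fin (m ^ 2) → Node m × Fin (m ^ 2)) |
      ¬ LoadWithin x.1 x.2 k (291 * L)} ≤
      2 * Real.exp (-(2 * L)) + 2 * (Real.exp (-(M / 4)) + (M : ℝ) ^ 2 / m ^ 2) +
        4 * Real.exp (-(L / 2)) := by
  have M_pos : (0 : ℝ) < M := by linarith
  obtain ⟨D, not_covers, outer⟩ := exists_covering_radius hexp hL hLM (by omega)
  obtain ⟨r, not_rich, inner⟩ := exists_private_radius (mod_cast M_pos) hM
  set G : Set (Placement m M (m ^ 2)) :=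
    {ω | Covers ω D ∧ m ^ 2 ≤ 2 * (richNodes ω (2 * r)).card}
  have prob_compl_G : unifProb Gᶜ ≤
      Real.exp (-(2 * L)) + 2 * (Real.exp (-(M / 4)) + (M : ℝ) ^ 2 / m ^ 2) := by
    refine (unifProb_mono fun ω hω => ?_).trans
      ((unifProb_union_le _ _).trans (add_le_add not_covers not_rich))
    exact (not_and_or.1 hω).imp_right not_le.1
  have prob_of_mem_G := unifProb_prod_le
    {x : Placement m M (m ^ 2) × (Fin (m ^ 2) → Node m × Fin (m ^ 2)) |
      ¬ LoadWithin x.1 x.2 k (291 * L)} G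
    (δ := Real.exp (-(2 * L)) + 4 * Real.exp (-(L / 2))) (by positivity) fun ω hω =>
      unifProb_not_loadWithin_le_of_covers hexp hω.1 outer hω.2 inner hk hkm hkL
  linarith

lemma mul_ceil_pow_ceil_le_exp (hL : 800 ≤ L) (hlog : 8 * Real.log L ≤ L) :
    (3200 * (⌈1 / 8 * L / Real.log L⌉₊ : ℝ)) ^ ⌈1 / 8 * L / Real.log L⌉₊ ≤ Real.exp (L / 2) := by
  set k := ⌈1 / 8 * L / Real.log L⌉₊
  have k_mul_log_le : k * Real.log L ≤ L / 4 := ceil_mul_log_le (by linarith) hlog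
  have one_le_log := one_le_log_of_three_le (L := L) (by linarith)
  have k_le : 3200 * (k : ℝ) ≤ L ^ 2 := by nlinarith
  calc (3200 * (k : ℝ)) ^ k ≤ (L ^ 2) ^ k := by gcongr
    _ = Real.exp (2 * (k * Real.log L)) := by
        rw [← pow_mul, ← Real.exp_log (pow_pos (by linarith) (2 * k)), Real.log_pow]
        push_cast
        ring_nf
    _ ≤ Real.exp (L / 2) := Real.exp_le_exp.2 (by linarith)

lemma unifProb_not_loadWithin_log_div_log_log_le (hexp : Real.exp L = m ^ 2) (hL : 800 ≤ L)
    (hlog : 8 * Real.log L ≤ L) (hLM : 4 * L < M) (hM : 800 * M ≤ m ^ 2) :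
    unifProb {x : Placement m M (m ^ 2) × (Fin (m ^ 2) → Node m × Fin (m ^ 2)) |
      ¬ LoadWithin x.1 x.2 (1 / 8 * L / Real.log L) (291 * L)} ≤
      2 * Real.exp (-(2 * L)) + 2 * (Real.exp (-(M / 4)) + (M : ℝ) ^ 2 / m ^ 2) +
        4 * Real.exp (-(L / 2)) := by
  set k := ⌈1 / 8 * L / Real.log L⌉₊
  have one_le_log := one_le_log_of_three_le (L := L) (by linarith)
  have k_mul_log_le : k * Real.log L ≤ L / 4 := ceil_mul_log_le (by linarith) hlog
  have two_mul_k_le : 2 * k ≤ m ^ 2 := by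
    have : 2 * (k : ℝ) ≤ m ^ 2 := by nlinarith [Real.add_one_le_exp L]
    exact_mod_cast this
  exact (unifProb_mono fun x => mt fun hload => hload.mono_left (Nat.le_ceil _)).trans
    (unifProb_not_loadWithin_le hexp (by linarith) hLM hM (Nat.ceil_pos.2 (by positivity))
      two_mul_k_le (mul_ceil_pow_ceil_le_exp hL hlog))

end SquareLibrary

/-! ### Asymptotics -/

section Asymptotics

lemma eventually_mul_rpow_le_rpow {a b : ℝ} (hab : a < b) (c : ℝ) :
    ∀ᶠ x : ℝ in atTop, c * x ^ a ≤ x ^ b := by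
  filter_upwards [(tendsto_rpow_atTop (sub_pos.2 hab)).eventually_ge_atTop c,
    eventually_gt_atTop 0] with x hc hx
  calc c * x ^ a ≤ x ^ (b - a) * x ^ a := by gcongr
    _ = x ^ b := by rw [← Real.rpow_add hx, sub_add_cancel]

lemma eventually_mul_log_lt_rpow {a : ℝ} (ha : 0 < a) (c : ℝ) :
    ∀ᶠ x : ℝ in atTop, c * Real.log x < x ^ a := by
  filter_upwards [((isLittleO_log_rpow_atTop ha).const_mul_left c).bound one_half_pos,
    eventually_gt_atTop 0] with x hle hx
  have rpow_pos := Real.rpow_pos_of_pos hx a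
  rw [Real.norm_of_nonneg rpow_pos.le] at hle
  linarith [Real.le_norm_self (c * Real.log x)]

lemma exp_neg_add_sq_div_le_mul_rpow_neg {n M α γ : ℝ} (hn : 1 ≤ n) (hM : 4 * Real.log n < M)
    (hMα : M ≤ 2 * n ^ α) (hγ : γ ≤ 1 / 2) (hγα : γ ≤ 1 - 2 * α) :
    2 * Real.exp (-(2 * Real.log n)) + 2 * (Real.exp (-(M / 4)) + M ^ 2 / n) +
        4 * Real.exp (-(Real.log n / 2)) ≤ 16 * n ^ (-γ) := by
  have n_pos : 0 < n := zero_lt_one.trans_le hn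
  have log_nonneg := Real.log_nonneg hn
  have exp_le : ∀ y, Real.log n / 2 ≤ y → Real.exp (-y) ≤ n ^ (-γ) := by
    intro y hy
    rw [Real.rpow_def_of_pos n_pos, Real.exp_le_exp]
    nlinarith
  have sq_div_le : M ^ 2 / n ≤ 4 * n ^ (-γ) := by
    calc M ^ 2 / n ≤ (2 * n ^ α) ^ 2 / n := by
          gcongr
          linarith
      _ = 4 * n ^ (2 * α - 1) := by
          rw [Real.rpow_sub_one n_pos.ne', mul_comm 2 α, Real.rpow_mul n_pos.le, Real.rpow_two]
          ring
      _ ≤ 4 * n ^ (-γ) := by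
          gcongr 4 * ?_
          exact Real.rpow_le_rpow_of_exponent_le hn (by linarith)
  linarith [exp_le (2 * Real.log n) (by linarith), exp_le (M / 4) (by linarith),
    exp_le (Real.log n / 2) le_rfl]

lemma eventually_unifProb_not_loadWithin_le {α β : ℝ} (hα : 0 < α) (hβ₀ : 0 < β)
    (hβ : β < 1 / 2) (hβα : β < 1 - 2 * α) :
    ∀ᶠ m : ℕ in atTop,
      unifProb {x : Placement m (Mf α (m ^ 2)) (m ^ 2) ×
          (Fin (m ^ 2) → Node m × Fin (m ^ 2)) |
        ¬ LoadWithin x.1 x.2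
          (1 / 8 * Real.log (m ^ 2 : ℕ) / Real.log (Real.log (m ^ 2 : ℕ)))
          (291 * Real.log (m ^ 2 : ℕ))} ≤ ((m ^ 2 : ℕ) : ℝ) ^ (-β) := by
  obtain ⟨γ, hβγ, hγ⟩ := exists_between (lt_min hβ hβα)
  have sq_tendsto : Tendsto (fun m : ℕ => ((m ^ 2 : ℕ) : ℝ)) atTop atTop :=
    tendsto_natCast_atTop_atTop.comp (tendsto_pow_atTop two_ne_zero)
  filter_upwards [eventually_gt_atTop 0,
    sq_tendsto.eventually (Real.tendsto_log_atTop.eventually_ge_atTop 800),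
    sq_tendsto.eventually (Real.tendsto_log_atTop.eventually
      (eventually_mul_log_lt_rpow one_pos 8)),
    sq_tendsto.eventually (eventually_mul_log_lt_rpow hα 4),
    sq_tendsto.eventually (eventually_mul_rpow_le_rpow (by linarith : α < 1) 1600),
    sq_tendsto.eventually (eventually_mul_rpow_le_rpow (neg_lt_neg hβγ) 16)]
    with m m_pos log_ge log_log_lt log_lt rpow_le sixteen_mul_le
  have : NeZero m := ⟨m_pos.ne'⟩
  set n : ℝ := ((m ^ 2 : ℕ) : ℝ)
  have n_eq : n = (m : ℝ) ^ 2 := Nat.cast_pow m 2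
  rw [Real.rpow_one] at log_log_lt rpow_le
  have one_le_n : 1 ≤ n := Nat.one_le_cast.2 (pow_pos m_pos 2)
  have le_M : n ^ α ≤ Mf α (m ^ 2) := Nat.le_ceil _
  have M_le : (Mf α (m ^ 2) : ℝ) ≤ 2 * n ^ α := Nat.ceil_le_two_mul
    (by linarith [Real.one_le_rpow one_le_n hα.le])
  have M_le_sq : 800 * Mf α (m ^ 2) ≤ m ^ 2 := by
    have : 800 * (Mf α (m ^ 2) : ℝ) ≤ (m : ℝ) ^ 2 := by linarith
    exact_mod_cast this
  refine (unifProb_not_loadWithin_log_div_log_log_le ?_ log_ge log_log_lt.le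
    (log_lt.trans_le le_M) M_le_sq).trans ?_
  · rw [Real.exp_log (zero_lt_one.trans_le one_le_n), n_eq]
  · rw [← n_eq]
    exact (exp_neg_add_sq_div_le_mul_rpow_neg one_le_n (log_lt.trans_le le_M) M_le
      (hγ.le.trans (min_le_left _ _)) (hγ.le.trans (min_le_right _ _))).trans sixteen_mul_le

end Asymptotics

/-- With `K = n`, `M = ⌈n^α⌉` (`0 < α < 1/2` constant) and Uniform
popularity, the maximum load of Strategy I lies in
`[Ω(log n/log log n), O(log n)]` with high probability. -/
theorem statement3 (α : ℝ) (hα0 : 0 < α) (hα1 : α < 1 / 2) :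
    ∃ c₁ c₂ c : ℝ, 0 < c₁ ∧ 0 < c₂ ∧ 0 < c ∧ ∃ N : ℕ, ∀ m : ℕ, N ≤ m →
      1 - (((m ^ 2 : ℕ) : ℝ)) ^ (-c) ≤
        unifProb {x : Placement m (Mf α (m ^ 2)) (m ^ 2) ×
            (Fin (m ^ 2) → Node m × Fin (m ^ 2)) |
          (∃ A, validAssign x.1 x.2 A) ∧
          ∀ A, validAssign x.1 x.2 A →
            c₁ * Real.log ((m ^ 2 : ℕ) : ℝ) / Real.log (Real.log ((m ^ 2 : ℕ) : ℝ)) ≤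
              (maxLoad A : ℝ) ∧
            (maxLoad A : ℝ) ≤ c₂ * Real.log ((m ^ 2 : ℕ) : ℝ)} := by
  have rate_pos : (0 : ℝ) < min (1 / 2) (1 - 2 * α) := lt_min one_half_pos (by linarith)
  obtain ⟨c, c_pos, hc⟩ := exists_between rate_pos
  obtain ⟨N, hN⟩ := eventually_atTop.1 ((eventually_gt_atTop 0).and
    (eventually_unifProb_not_loadWithin_le hα0 c_pos (hc.trans_le (min_le_left _ _))
      (hc.trans_le (min_le_right _ _))))
  refine ⟨1 / 8, 291, c, by norm_num, by norm_num, c_pos, N, fun m hm => ?_⟩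
  obtain ⟨m_pos, failure_le⟩ := hN m hm
  have : NeZero m := ⟨m_pos.ne'⟩
  rw [← Set.compl_ofPred, unifProb_compl] at failure_le
  exact sub_le_comm.1 failure_le
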